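/- For every δ ∈ (0,1) there exist c, C > 0 (depending only on δ) such that the following holds. Let G = (V,E) be a finite simple graph on n vertices with maximum degree at most Δ, where Δ ≥ 3 is an integer, let λ ∈ (0, (1−δ)·λ_Δ], and let μ be the hardcore model on G with uniform fugacity λ. Let κ > 0 and let f : 2^V → ℝ satisfy 0 ≤ f(σ ∪ {v}) − f(σ) ≤ κ for every σ ⊆ V and v ∉ σ. Then: (a) for every t with 0 ≤ t ≤ C·λ·κ·n, both P_μ( f − E_μ[f] > t ) ≤ exp(−c·t²/(λ·κ²·n)) and P_μ( f − E_μ[f] < −t ) ≤ exp(−c·t²/(λ·κ²·n)); and (b) for every t ≥ 0, both P_μ( f − E_μ[f] > t ) ≤ exp(C·λ·n)·exp(−c·t/κ) and P_μ( f − E_μ[f] < −t ) ≤ exp(C·λ·n)·exp(−c·t/κ). -/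

import Mathlib

/-!
The tails follow by Chernoff's method from
`E exp(s (f - E f)) ≤ exp((s L)² ∑ lam v)` for `|s| L ≤ 1`, with `L = κ (1 + 252 / δ)`.

*Moment bound.* Reveal the vertices one at a time. Conditionally on `v` being empty or occupied the
law is again a hardcore model, on `G - v` or `G - N[v]`, that is, with some fugacities set to `0`.
As `v` is occupied with probability at most `lam v`, one step costs at most `lam v * (s J)²` in the
exponent, where the influence `J` of `v` is the difference of the two conditional means of `f`. So
it suffices to bound influences by `L`, whichever vertices have been deleted.

*Influence bound.* Passing from `G - v` to `G - N[v]` deletes the neighbours `u₁, …, u_d` of `v`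
successively. Deleting `u_i` moves the mean by `p_i J_i`, where `p_i` is the occupation probability
of `u_i` in the current graph and `J_i` its influence there, whence `J ≤ κ + ∑ p_i J_i`. The same
deletions give the odds `p / (1 - p) = lam v * ∏ (1 - p_i)` of `v`. This is the recursion on the
tree of self-avoiding walks, in which every vertex other than the root has at most `Δ - 1`
children. Then `√p J ≤ κ √p + √p ∑ √p_i (√p_i J_i)`, and below `(1 - δ) λ_Δ` one has
`√p ∑ √p_i ≤ 1 - δ / 14`. Hence `√p J ≤ (14 / δ) κ √λ_Δ` for inner vertices, and since
`Δ λ_Δ ≤ 18` the root satisfies `J ≤ κ + (14 / δ) κ Δ λ_Δ ≤ L`.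
-/

open Finset

noncomputable section
attribute [local instance] Classical.propDecidable

variable {V : Type*} [Fintype V] [DecidableEq V]

/-- `σ` is an independent set of `G`: no two of its elements are adjacent. -/
def IndepSet (G : SimpleGraph V) (σ : Finset V) : Prop :=
  ∀ u ∈ σ, ∀ w ∈ σ, ¬ G.Adj u w

/-- Unnormalized hardcore weight of `σ`: `∏_{v ∈ σ} λ_v` if `σ` is independent, else `0`. -/
def hcWeight (G : SimpleGraph V) (lam : V → ℝ) (σ : Finset V) : ℝ :=
  if IndepSet G σ then ∏ v ∈ σ, lam v else 0

/-- The hardcore model on `G` with fugacities `lam`, as a distribution on `Finset V`. -/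
def hardcore (G : SimpleGraph V) (lam : V → ℝ) (σ : Finset V) : ℝ :=
  hcWeight G lam σ / ∑ τ : Finset V, hcWeight G lam τ

/-- The tree-uniqueness threshold `λ_Δ = (Δ−1)^{Δ−1}/(Δ−2)^Δ`. -/
def hcCrit (Δ : ℕ) : ℝ := ((Δ : ℝ) - 1) ^ (Δ - 1) / ((Δ : ℝ) - 2) ^ Δ

/-- Mean of `f` under a distribution `μ` on a finite set. -/
def expect {Ω : Type*} [Fintype Ω] (μ : Ω → ℝ) (f : Ω → ℝ) : ℝ :=
  ∑ x, μ x * f x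

/-- Upper tail probability `P_μ(f − E_μ[f] > t)`. -/
def upperTail {Ω : Type*} [Fintype Ω] (μ : Ω → ℝ) (f : Ω → ℝ) (t : ℝ) : ℝ :=
  ∑ x ∈ univ.filter (fun x => expect μ f + t < f x), μ x

/-- Lower tail probability `P_μ(f − E_μ[f] < −t)`. -/
def lowerTail {Ω : Type*} [Fintype Ω] (μ : Ω → ℝ) (f : Ω → ℝ) (t : ℝ) : ℝ :=
  ∑ x ∈ univ.filter (fun x => f x < expect μ f - t), μ x

section FiniteDistributions

variable {Ω : Type*} [Fintype Ω] {μ : Ω → ℝ}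

lemma expect_neg (μ f : Ω → ℝ) : expect μ (-f) = -expect μ f := by
  simp [_root_.expect]

lemma abs_expect_sub_expect_le (hμ : 0 ≤ μ) (hμ_sum : ∑ x, μ x = 1) {f g : Ω → ℝ} {κ : ℝ}
    (hfg : ∀ x, |f x - g x| ≤ κ) : |expect μ f - expect μ g| ≤ κ :=
  calc |expect μ f - expect μ g| = |∑ x, μ x * (f x - g x)| := by
        simp only [_root_.expect, mul_sub, Finset.sum_sub_distrib]
    _ ≤ ∑ x, μ x * |f x - g x| := by
        refine (Finset.abs_sum_le_sum_abs _ _).trans_eq (Finset.sum_congr rfl fun x _ => ?_)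
        rw [abs_mul, abs_of_nonneg (hμ x)]
    _ ≤ ∑ x, μ x * κ := Finset.sum_le_sum fun x _ => mul_le_mul_of_nonneg_left (hfg x) (hμ x)
    _ = κ := by rw [← Finset.sum_mul, hμ_sum, one_mul]

lemma lowerTail_eq_upperTail_neg (μ f : Ω → ℝ) (t : ℝ) :
    lowerTail μ f t = upperTail μ (-f) t := by
  rw [lowerTail, upperTail, expect_neg]
  congr! 2 with x
  rw [Pi.neg_apply, lt_neg, neg_add', neg_neg]

lemma upperTail_le_exp_mul_expect_exp (hμ : 0 ≤ μ) (f : Ω → ℝ) {s : ℝ} (hs : 0 ≤ s) (t : ℝ) :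
    upperTail μ f t ≤
      Real.exp (-(s * (expect μ f + t))) * expect μ (fun x => Real.exp (s * f x)) := by
  rw [upperTail, Finset.sum_filter, expect.eq_def μ fun x => Real.exp (s * f x), Finset.mul_sum]
  refine Finset.sum_le_sum fun x _ => ?_
  rw [mul_left_comm, ← Real.exp_add]
  split_ifs with hx
  · refine le_mul_of_one_le_right (hμ x) (Real.one_le_exp ?_)
    linarith [mul_le_mul_of_nonneg_left hx.le hs]
  · exact mul_nonneg (hμ x) (Real.exp_pos _).le

end FiniteDistributions

section RealInequalities

lemma bernoulli_exp_le {p a b : ℝ} (hp : 0 ≤ p) (hab : |a - b| ≤ 1) :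
    (1 - p) * Real.exp b + p * Real.exp a ≤
      Real.exp ((1 - p) * b + p * a + p * (a - b) ^ 2) := by
  have hexp : Real.exp (a - b) - 1 ≤ (a - b) + (a - b) ^ 2 := by
    linarith [(abs_le.1 (Real.abs_exp_sub_one_sub_id_le hab)).2]
  calc (1 - p) * Real.exp b + p * Real.exp a
      = Real.exp b * (p * (Real.exp (a - b) - 1) + 1) := by
        rw [Real.exp_sub]; field_simp; ring
    _ ≤ Real.exp b * (p * ((a - b) + (a - b) ^ 2) + 1) := by gcongr
    _ ≤ Real.exp b * Real.exp (p * ((a - b) + (a - b) ^ 2)) := by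
        gcongr; exact Real.add_one_le_exp _
    _ = Real.exp ((1 - p) * b + p * a + p * (a - b) ^ 2) := by rw [← Real.exp_add]; congr 1; ring

section ChernoffOptimization

variable {P T L t : ℝ}
  (hP : ∀ s : ℝ, 0 ≤ s → s * L ≤ 1 → P ≤ Real.exp ((s * L) ^ 2 * T - s * t))
include hP

lemma le_exp_neg_sq_div_of_chernoff (hT : 0 ≤ T) (hL : 0 < L) (ht : 0 ≤ t) (htT : t ≤ 2 * T * L) :
    P ≤ Real.exp (-t ^ 2 / (4 * T * L ^ 2)) := by
  rcases hT.eq_or_lt with rfl | hT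
  -- Division by zero makes the right-hand side `exp 0`, which is the bound at `s = 0`.
  · simpa using hP 0 le_rfl (by simp)
  · refine (hP (t / (2 * T * L ^ 2)) (by positivity) ?_).trans_eq ?_
    · rw [div_mul_eq_mul_div, div_le_one (by positivity)]
      calc t * L ≤ 2 * T * L * L := by gcongr
        _ = 2 * T * L ^ 2 := by ring
    · congr 1
      field_simp
      ring

lemma le_exp_mul_exp_neg_div_of_chernoff (hL : 0 < L) :
    P ≤ Real.exp T * Real.exp (-t / L) := by
  refine (hP (1 / L) (by positivity) (by field_simp; rfl)).trans_eq ?_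
  rw [← Real.exp_add]
  congr 1
  field_simp
  ring

end ChernoffOptimization

section TreeRecursion

variable {ι : Type*} {N : Finset ι} {p : ι → ℝ} {d : ℕ}

/- Equality holds for `d` indices with `p u = 1 / d`. Each factor `1 - p u` is bounded by its
exponential tangent at `1 / d`, as are the `d - #N` missing factors, which count as `p u = 0`. -/
lemma prod_one_sub_le (hp : ∀ u ∈ N, p u ≤ 1) (hd : 2 ≤ d) (hN : #N ≤ d) :
    ∏ u ∈ N, (1 - p u) ≤
      (((d : ℝ) - 1) / d) ^ d * Real.exp (d * (1 - ∑ u ∈ N, p u) / (d - 1)) := by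
  have hd_cast : (2 : ℝ) ≤ d := by exact_mod_cast hd
  have hd_pred : (0 : ℝ) < d - 1 := by linarith
  have hd_pos : (0 : ℝ) < d := by linarith
  set q : ℝ := (d - 1) / d with hq
  have hq_pos : 0 < q := div_pos hd_pred hd_pos
  set r : ℝ := q * Real.exp (1 / (d - 1)) with hr
  have tangent : ∀ x : ℝ, 1 - x ≤ r * Real.exp (-(d / (d - 1)) * x) := fun x => by
    have := Real.add_one_le_exp (1 / ((d : ℝ) - 1) + -(d / (d - 1)) * x)
    calc 1 - x = q * (1 / ((d : ℝ) - 1) + -(d / (d - 1)) * x + 1) := by rw [hq]; field_simp; ring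
      _ ≤ q * Real.exp (1 / ((d : ℝ) - 1) + -(d / (d - 1)) * x) :=
          mul_le_mul_of_nonneg_left this hq_pos.le
      _ = r * Real.exp (-(d / (d - 1)) * x) := by rw [Real.exp_add, hr, mul_assoc]
  have one_le_r : 1 ≤ r := by simpa using tangent 0
  calc ∏ u ∈ N, (1 - p u) ≤ ∏ u ∈ N, (r * Real.exp (-(d / (d - 1)) * p u)) :=
        Finset.prod_le_prod (fun u hu => sub_nonneg.2 (hp u hu)) fun u _ => tangent (p u)
    _ = r ^ #N * Real.exp (-(d / (d - 1)) * ∑ u ∈ N, p u) := by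
        rw [Finset.prod_mul_distrib, Finset.prod_const, ← Real.exp_sum, Finset.mul_sum]
    _ ≤ r ^ d * Real.exp (-(d / (d - 1)) * ∑ u ∈ N, p u) := by gcongr
    _ = q ^ d * Real.exp (d * (1 - ∑ u ∈ N, p u) / (d - 1)) := by
        rw [hr, mul_pow, ← Real.exp_nat_mul, mul_assoc, ← Real.exp_add]
        ring_nf

lemma prod_one_sub_mul_le (hp : ∀ u ∈ N, p u ≤ 1) (hd : 2 ≤ d) (hN : #N ≤ d) :
    (∏ u ∈ N, (1 - p u)) * (d * ∑ u ∈ N, p u - 1) ≤ ((d : ℝ) - 1) ^ (d + 1) / (d : ℝ) ^ d := by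
  have hd_cast : (2 : ℝ) ≤ d := by exact_mod_cast hd
  have hd_pred : (0 : ℝ) < d - 1 := by linarith
  have hprod := prod_one_sub_le hp hd hN
  set S := ∑ u ∈ N, p u
  set x : ℝ := d * (1 - S) / (d - 1) with hx
  have tangent : d * S - 1 ≤ (d - 1) * Real.exp (-x) := by
    have := Real.add_one_le_exp (-x)
    calc (d : ℝ) * S - 1 = (d - 1) * (-x + 1) := by rw [hx]; field_simp; ring
      _ ≤ (d - 1) * Real.exp (-x) := by gcongr
  have hprod_nonneg : 0 ≤ ∏ u ∈ N, (1 - p u) :=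
    Finset.prod_nonneg fun u hu => sub_nonneg.2 (hp u hu)
  calc (∏ u ∈ N, (1 - p u)) * (d * S - 1)
      ≤ (∏ u ∈ N, (1 - p u)) * ((d - 1) * Real.exp (-x)) := by gcongr
    _ ≤ ((((d : ℝ) - 1) / d) ^ d * Real.exp x) * ((d - 1) * Real.exp (-x)) := by gcongr
    _ = ((d : ℝ) - 1) ^ (d + 1) / (d : ℝ) ^ d := by rw [Real.exp_neg, div_pow, pow_succ]; field_simp

lemma hcCrit_succ (d : ℕ) : hcCrit (d + 1) = (d : ℝ) ^ d / ((d : ℝ) - 1) ^ (d + 1) := by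
  rw [hcCrit, Nat.add_sub_cancel]
  push_cast
  congr 2 <;> ring

lemma hcCrit_pos {Δ : ℕ} (hΔ : 3 ≤ Δ) : 0 < hcCrit Δ := by
  have hΔ_cast : (3 : ℝ) ≤ Δ := by exact_mod_cast hΔ
  have h1 : (0 : ℝ) < Δ - 1 := by linarith
  have h2 : (0 : ℝ) < Δ - 2 := by linarith
  unfold hcCrit
  positivity

lemma mul_hcCrit_le {Δ : ℕ} (hΔ : 3 ≤ Δ) : Δ * hcCrit Δ ≤ 18 := by
  obtain ⟨n, hn, rfl⟩ : ∃ n, 1 ≤ n ∧ Δ = n + 1 + 1 := ⟨Δ - 2, by omega, by omega⟩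
  have hn_cast : (1 : ℝ) ≤ n := by exact_mod_cast hn
  have hpow : ((n : ℝ) + 1) ^ n ≤ 3 * (n : ℝ) ^ n :=
    calc ((n : ℝ) + 1) ^ n = (1 + (n : ℝ)⁻¹) ^ n * (n : ℝ) ^ n := by
          rw [← mul_pow]; congr 1; field_simp
      _ ≤ 3 * (n : ℝ) ^ n := by
          gcongr
          exact Real.one_add_inv_pow_le_exp.trans Real.exp_one_lt_three.le
  rw [hcCrit_succ]
  push_cast
  rw [add_sub_cancel_right, mul_div_assoc', div_le_iff₀ (by positivity)]
  calc ((n : ℝ) + 1 + 1) * (n + 1) ^ (n + 1) = (n + 2) * (n + 1) * (n + 1) ^ n := by ring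
    _ ≤ (3 * n) * (2 * n) * (3 * n ^ n) := by gcongr <;> linarith
    _ = 18 * n ^ (n + 1 + 1) := by ring

lemma hcCrit_le_six {Δ : ℕ} (hΔ : 3 ≤ Δ) : hcCrit Δ ≤ 6 := by
  have hΔ_cast : (3 : ℝ) ≤ Δ := by exact_mod_cast hΔ
  linarith [mul_hcCrit_le hΔ, mul_le_mul_of_nonneg_right hΔ_cast (hcCrit_pos hΔ).le]

lemma odds_mul_sum_sub_one_le {Δ : ℕ} (hΔ : 3 ≤ Δ) (hp : ∀ u ∈ N, p u ≤ 1) (hN : #N ≤ Δ - 1)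
    {δ a : ℝ} (ha : 0 ≤ a) (haδ : a ≤ (1 - δ) * hcCrit Δ) :
    a * (∏ u ∈ N, (1 - p u)) * ((Δ - 1 : ℕ) * ∑ u ∈ N, p u - 1) ≤ 1 - δ := by
  obtain ⟨d, rfl⟩ : ∃ d, Δ = d + 1 := ⟨Δ - 1, by omega⟩
  rw [Nat.add_sub_cancel] at hN ⊢
  have hd_cast : (2 : ℝ) ≤ d := by exact_mod_cast (by omega : 2 ≤ d)
  have hd_pred : (0 : ℝ) < d - 1 := by linarith
  calc a * (∏ u ∈ N, (1 - p u)) * (d * ∑ u ∈ N, p u - 1)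
      = a * ((∏ u ∈ N, (1 - p u)) * (d * ∑ u ∈ N, p u - 1)) := mul_assoc _ _ _
    _ ≤ a * (((d : ℝ) - 1) ^ (d + 1) / (d : ℝ) ^ d) := by
        gcongr; exact prod_one_sub_mul_le hp (by omega) hN
    _ ≤ (1 - δ) * hcCrit (d + 1) * (((d : ℝ) - 1) ^ (d + 1) / (d : ℝ) ^ d) := by gcongr
    _ = 1 - δ := by rw [hcCrit_succ]; field_simp

lemma sq_sum_sqrt_le_mul_sum (hp : ∀ u ∈ N, 0 ≤ p u) (hN : #N ≤ d) :
    (∑ u ∈ N, √(p u)) ^ 2 ≤ d * ∑ u ∈ N, p u :=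
  calc (∑ u ∈ N, √(p u)) ^ 2 ≤ #N * ∑ u ∈ N, √(p u) ^ 2 := sq_sum_le_card_mul_sum_sq
    _ = #N * ∑ u ∈ N, p u := by rw [Finset.sum_congr rfl fun u hu => Real.sq_sqrt (hp u hu)]
    _ ≤ d * ∑ u ∈ N, p u := by gcongr; exact Finset.sum_nonneg hp

/- Strict contraction of the tree recursion `p ↦ y / (1 + y)` in the metric `|dp| / √p`. The
constant is `14 = 2 * (1 + 6)`, where `1 + 6` bounds `1 + y` and `2` comes from the square root. -/
lemma sqrt_odds_mul_sum_sqrt_le {Δ : ℕ} (hΔ : 3 ≤ Δ) (hp : ∀ u ∈ N, p u ∈ Set.Icc (0 : ℝ) 1)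
    (hN : #N ≤ Δ - 1) {δ a y : ℝ} (hδ : 0 ≤ δ) (ha : 0 ≤ a) (haδ : a ≤ (1 - δ) * hcCrit Δ)
    (hy : y = a * ∏ u ∈ N, (1 - p u)) :
    √(y / (1 + y)) * ∑ u ∈ N, √(p u) ≤ 1 - δ / 14 := by
  have hδ_le : δ ≤ 1 := by
    have := nonneg_of_mul_nonneg_left (ha.trans haδ) (hcCrit_pos hΔ)
    linarith
  have hprod_nonneg : 0 ≤ ∏ u ∈ N, (1 - p u) :=
    Finset.prod_nonneg fun u hu => sub_nonneg.2 (hp u hu).2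
  have hprod_le : ∏ u ∈ N, (1 - p u) ≤ 1 :=
    Finset.prod_le_one (fun u hu => sub_nonneg.2 (hp u hu).2) fun u hu => by
      linarith [(hp u hu).1]
  have ha_le : a ≤ 6 := by nlinarith [hcCrit_le_six hΔ, hcCrit_pos hΔ]
  have hy_nonneg : 0 ≤ y := hy ▸ mul_nonneg ha hprod_nonneg
  have hy_le : y ≤ 6 := hy ▸ (mul_le_of_le_one_right ha hprod_le).trans ha_le
  have hodds := hy ▸ odds_mul_sum_sub_one_le hΔ (fun u hu => (hp u hu).2) hN ha haδ
  refine le_of_sq_le_sq ?_ (by linarith)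
  calc (√(y / (1 + y)) * ∑ u ∈ N, √(p u)) ^ 2
      = y / (1 + y) * (∑ u ∈ N, √(p u)) ^ 2 := by rw [mul_pow, Real.sq_sqrt (by positivity)]
    _ ≤ y / (1 + y) * ((Δ - 1 : ℕ) * ∑ u ∈ N, p u) := by
        gcongr; exact sq_sum_sqrt_le_mul_sum (fun u hu => (hp u hu).1) hN
    _ ≤ 1 - δ / 7 := by
        rw [div_mul_eq_mul_div, div_le_iff₀ (by positivity)]
        nlinarith
    _ ≤ (1 - δ / 14) ^ 2 := by nlinarith

end TreeRecursion

end RealInequalities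

section VertexDeletion

variable {α : Type*} {lam : α → ℝ} {N : Set α} {v : α}

/-- The fugacities `lam` switched off on `N`: they encode the hardcore model on `G - N`, since a
vertex of fugacity `0` is almost surely unoccupied. -/
def deleteVerts (lam : α → ℝ) (N : Set α) : α → ℝ := Nᶜ.indicator lam

lemma deleteVerts_of_mem (hv : v ∈ N) : deleteVerts lam N v = 0 :=
  Set.indicator_of_notMem (Set.notMem_compl_iff.2 hv) lam

lemma deleteVerts_of_notMem (hv : v ∉ N) : deleteVerts lam N v = lam v :=
  Set.indicator_of_mem hv lam

lemma deleteVerts_empty (lam : α → ℝ) : deleteVerts lam ∅ = lam := by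
  rw [deleteVerts, Set.compl_empty, Set.indicator_univ]

lemma deleteVerts_deleteVerts (lam : α → ℝ) (M N : Set α) :
    deleteVerts (deleteVerts lam M) N = deleteVerts lam (M ∪ N) := by
  rw [deleteVerts, deleteVerts, deleteVerts, Set.indicator_indicator, Set.compl_union,
    Set.inter_comm]

lemma deleteVerts_nonneg (hlam : 0 ≤ lam) (N : Set α) : 0 ≤ deleteVerts lam N :=
  fun _ => Set.indicator_nonneg (fun v _ => hlam v) _

lemma deleteVerts_le (hlam : 0 ≤ lam) (N : Set α) : deleteVerts lam N ≤ lam :=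
  Set.indicator_le_self' fun v _ => hlam v

lemma sum_deleteVerts_add_le [Fintype α] (hlam : 0 ≤ lam) (hv : v ∈ N) :
    ∑ u, deleteVerts lam N u + lam v ≤ ∑ u, lam u := by
  rw [← Finset.sum_erase_add _ _ (Finset.mem_univ v),
    ← Finset.sum_erase_add _ lam (Finset.mem_univ v), deleteVerts_of_mem hv, add_zero]
  gcongr
  exact deleteVerts_le hlam N _

lemma deleteVerts_induction [Finite α] {P : (α → ℝ) → Prop}
    (step : ∀ lam, (∀ N, ∀ v ∈ N, lam v ≠ 0 → P (deleteVerts lam N)) → P lam) (lam : α → ℝ) :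
    P lam := by
  induction h : (Function.support lam).ncard using Nat.strong_induction_on generalizing lam with
  | _ n ih =>
    subst h
    refine step lam fun N v hvN hv => ih _ (Set.ncard_lt_ncard ⟨?_, fun hsub => ?_⟩) _ rfl
    · exact Set.support_indicator.trans_subset Set.inter_subset_right
    · exact hsub hv (deleteVerts_of_mem hvN)

end VertexDeletion

section HardcoreModel

variable {α : Type*} {G : SimpleGraph α} {lam : α → ℝ}

/-- The fugacities left once `v` is occupied: `v` and its neighbours are deleted. -/
def deleteClosedNbhd (G : SimpleGraph α) (lam : α → ℝ) (v : α) : α → ℝ :=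
  deleteVerts lam (insert v (G.neighborSet v))

lemma hcWeight_empty (G : SimpleGraph α) (lam : α → ℝ) : hcWeight G lam ∅ = 1 := by
  simp [hcWeight, IndepSet]

lemma hcWeight_nonneg (hlam : 0 ≤ lam) (σ : Finset α) : 0 ≤ hcWeight G lam σ := by
  unfold hcWeight
  split_ifs
  exacts [Finset.prod_nonneg fun v _ => hlam v, le_rfl]

lemma hcWeight_deleteVerts_of_disjoint {N : Set α} {σ : Finset α} (hσ : Disjoint ↑σ N) :
    hcWeight G (deleteVerts lam N) σ = hcWeight G lam σ := by
  unfold hcWeight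
  rw [Finset.prod_congr rfl fun v hv => deleteVerts_of_notMem (Set.disjoint_left.1 hσ hv)]

lemma hcWeight_eq_zero {σ : Finset α} {v : α} (hvσ : v ∈ σ) (hv : lam v = 0) :
    hcWeight G lam σ = 0 := by
  rw [hcWeight, Finset.prod_eq_zero hvσ hv, ite_self]

lemma hcWeight_deleteVerts_le (hlam : 0 ≤ lam) (N : Set α) (σ : Finset α) :
    hcWeight G (deleteVerts lam N) σ ≤ hcWeight G lam σ := by
  unfold hcWeight
  split_ifs
  exacts [Finset.prod_le_prod (fun v _ => deleteVerts_nonneg hlam N v)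
    fun v _ => deleteVerts_le hlam N v, le_rfl]

section Insert

variable [DecidableEq α] {σ : Finset α} {v : α}

lemma indepSet_insert : IndepSet G (insert v σ) ↔ IndepSet G σ ∧ ∀ u ∈ σ, ¬ G.Adj v u := by
  simp only [IndepSet, Finset.forall_mem_insert, G.irrefl, not_false_eq_true, true_and,
    G.adj_comm _ v]
  grind

lemma hcWeight_insert (lam : α → ℝ) (hv : v ∉ σ) :
    hcWeight G lam (insert v σ) = lam v * hcWeight G (deleteClosedNbhd G lam v) σ := by
  by_cases hadj : ∀ u ∈ σ, ¬ G.Adj v u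
  · have hdisj : Disjoint (σ : Set α) (insert v (G.neighborSet v)) :=
      Set.disjoint_insert_right.2 ⟨hv, Set.disjoint_left.2 hadj⟩
    rw [deleteClosedNbhd, hcWeight_deleteVerts_of_disjoint hdisj]
    simp only [hcWeight, indepSet_insert, and_iff_left hadj, Finset.prod_insert hv, mul_ite,
      mul_zero]
  · have hdep : ¬ IndepSet G (insert v σ) := fun h => hadj (indepSet_insert.1 h).2
    push Not at hadj
    obtain ⟨u, huσ, huv⟩ := hadj
    have hu : deleteClosedNbhd G lam v u = 0 := deleteVerts_of_mem (Set.mem_insert_of_mem v huv)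
    rw [hcWeight, if_neg hdep, hcWeight_eq_zero huσ hu, mul_zero]

end Insert

variable [Fintype α]

/-- Partition function of the hardcore model. -/
def hcPartition (G : SimpleGraph α) (lam : α → ℝ) : ℝ := ∑ σ, hcWeight G lam σ

lemma hcPartition_pos (hlam : 0 ≤ lam) : 0 < hcPartition G lam :=
  Finset.sum_pos' (fun σ _ => hcWeight_nonneg hlam σ)
    ⟨∅, Finset.mem_univ ∅, by simp [hcWeight_empty]⟩

lemma hcPartition_deleteVerts_le (hlam : 0 ≤ lam) (N : Set α) :
    hcPartition G (deleteVerts lam N) ≤ hcPartition G lam :=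
  Finset.sum_le_sum fun σ _ => hcWeight_deleteVerts_le hlam N σ

lemma hardcore_nonneg (hlam : 0 ≤ lam) : 0 ≤ hardcore G lam := fun σ =>
  div_nonneg (hcWeight_nonneg hlam σ) (hcPartition_pos hlam).le

lemma sum_hardcore (hlam : 0 ≤ lam) : ∑ σ, hardcore G lam σ = 1 := by
  simp only [hardcore, ← Finset.sum_div]
  exact div_self (hcPartition_pos hlam).ne'

lemma expect_hardcore (G : SimpleGraph α) (lam : α → ℝ) (g : Finset α → ℝ) :
    expect (hardcore G lam) g = (∑ σ, hcWeight G lam σ * g σ) / hcPartition G lam := by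
  simp only [_root_.expect, hardcore, hcPartition, Finset.sum_div, div_mul_eq_mul_div]

lemma expect_hardcore_zero (G : SimpleGraph α) (g : Finset α → ℝ) :
    expect (hardcore G 0) g = g ∅ := by
  have hweight : ∀ σ, hcWeight G 0 σ = if σ = ∅ then 1 else 0 := fun σ => by
    rcases σ.eq_empty_or_nonempty with rfl | ⟨v, hv⟩
    · simp [hcWeight_empty]
    · rw [hcWeight_eq_zero hv rfl, if_neg (Finset.ne_empty_of_mem hv)]
  simp [expect_hardcore, hcPartition, hweight]

/-- Probability that `v` is occupied under the hardcore model. -/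
def occ (G : SimpleGraph α) (lam : α → ℝ) (v : α) : ℝ := ∑ σ with v ∈ σ, hardcore G lam σ

lemma occ_nonneg (hlam : 0 ≤ lam) (v : α) : 0 ≤ occ G lam v :=
  Finset.sum_nonneg fun σ _ => hardcore_nonneg hlam σ

lemma occ_le_one (hlam : 0 ≤ lam) (v : α) : occ G lam v ≤ 1 :=
  (Finset.sum_le_univ_sum_of_nonneg (hardcore_nonneg hlam)).trans_eq (sum_hardcore hlam)

lemma sum_hcWeight_mul [DecidableEq α] (lam : α → ℝ) (v : α) (g : Finset α → ℝ) :
    ∑ σ, hcWeight G lam σ * g σ = ∑ σ, hcWeight G (deleteVerts lam {v}) σ * g σ +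
      lam v * ∑ σ, hcWeight G (deleteClosedNbhd G lam v) σ * g (insert v σ) := by
  have sum_split : ∀ F : Finset α → ℝ,
      ∑ σ, F σ = ∑ σ ∈ (univ.erase v).powerset, (F σ + F (insert v σ)) := fun F => by
    rw [Finset.sum_add_distrib, ← Finset.sum_powerset_insert (Finset.notMem_erase v univ),
      Finset.insert_erase (Finset.mem_univ v), Finset.powerset_univ]
  rw [Finset.mul_sum, ← Finset.sum_add_distrib, sum_split, sum_split]
  refine Finset.sum_congr rfl fun σ hσ => ?_
  have hv : v ∉ σ := fun h => Finset.notMem_erase v univ (Finset.mem_powerset.1 hσ h)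
  have hweight : hcWeight G (deleteVerts lam {v}) σ = hcWeight G lam σ :=
    hcWeight_deleteVerts_of_disjoint (Set.disjoint_singleton_right.2 hv)
  have hweight_del : hcWeight G (deleteVerts lam {v}) (insert v σ) = 0 :=
    hcWeight_eq_zero (Finset.mem_insert_self v σ) (deleteVerts_of_mem rfl)
  have hweight_nbhd : hcWeight G (deleteClosedNbhd G lam v) (insert v σ) = 0 :=
    hcWeight_eq_zero (Finset.mem_insert_self v σ) (deleteVerts_of_mem (Set.mem_insert v _))
  rw [hweight, hweight_del, hweight_nbhd, hcWeight_insert lam hv]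
  ring

lemma hcPartition_eq (lam : α → ℝ) (v : α) :
    hcPartition G lam =
      hcPartition G (deleteVerts lam {v}) + lam v * hcPartition G (deleteClosedNbhd G lam v) := by
  simpa only [hcPartition, mul_one] using sum_hcWeight_mul (G := G) lam v fun _ => 1

lemma occ_eq (lam : α → ℝ) (v : α) :
    occ G lam v = lam v * hcPartition G (deleteClosedNbhd G lam v) / hcPartition G lam := by
  have hsplit := sum_hcWeight_mul (G := G) lam v fun σ => if v ∈ σ then 1 else 0
  have hdel : ∑ σ with v ∈ σ, hcWeight G (deleteVerts lam {v}) σ = 0 :=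
    Finset.sum_eq_zero fun σ hσ =>
      hcWeight_eq_zero (Finset.mem_filter.1 hσ).2 (deleteVerts_of_mem rfl)
  simp only [mul_ite, mul_one, mul_zero, ← Finset.sum_filter, hdel, zero_add,
    Finset.mem_insert_self, Finset.filter_true] at hsplit
  simp only [occ, hardcore, ← Finset.sum_div, hsplit, hcPartition]

lemma one_sub_occ (hlam : 0 ≤ lam) (v : α) :
    1 - occ G lam v = hcPartition G (deleteVerts lam {v}) / hcPartition G lam := by
  rw [occ_eq, one_sub_div (hcPartition_pos hlam).ne']
  nth_rw 1 [hcPartition_eq lam v]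
  rw [add_sub_cancel_right]

lemma occ_le (hlam : 0 ≤ lam) (v : α) : occ G lam v ≤ lam v := by
  rw [occ_eq, div_le_iff₀ (hcPartition_pos hlam)]
  exact mul_le_mul_of_nonneg_left (hcPartition_deleteVerts_le hlam _) (hlam v)

lemma occ_eq_odds_div (hlam : 0 ≤ lam) {v : α} {y : ℝ}
    (hy : y = lam v * (hcPartition G (deleteClosedNbhd G lam v) /
      hcPartition G (deleteVerts lam {v}))) :
    occ G lam v = y / (1 + y) := by
  have hdel := hcPartition_pos (G := G) (deleteVerts_nonneg hlam {v})
  rw [occ_eq, hcPartition_eq lam v, hy]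
  field_simp

lemma expect_hardcore_eq [DecidableEq α] (hlam : 0 ≤ lam) (v : α) (g : Finset α → ℝ) :
    expect (hardcore G lam) g =
      (1 - occ G lam v) * expect (hardcore G (deleteVerts lam {v})) g +
      occ G lam v * expect (hardcore G (deleteClosedNbhd G lam v)) (fun σ => g (insert v σ)) := by
  have hdel := (hcPartition_pos (G := G) (deleteVerts_nonneg hlam {v})).ne'
  have hnbhd : hcPartition G (deleteClosedNbhd G lam v) ≠ 0 :=
    (hcPartition_pos (deleteVerts_nonneg hlam _)).ne'
  rw [one_sub_occ hlam, occ_eq]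
  simp only [expect_hardcore]
  rw [sum_hcWeight_mul lam v]
  field_simp

end HardcoreModel

section Influence

variable {α : Type*} [DecidableEq α] {κ : ℝ} {g : Finset α → ℝ}

/-- `g` is `κ`-Lipschitz for the Hamming distance. Increments of both signs are allowed, so that
the lower tail of `g` is the upper tail of a function of the same kind. -/
def HammingLipschitz (κ : ℝ) (g : Finset α → ℝ) : Prop := ∀ σ v, |g (insert v σ) - g σ| ≤ κ

lemma HammingLipschitz.of_forall_notMem (hκ : 0 ≤ κ)
    (h : ∀ σ, ∀ v ∉ σ, |g (insert v σ) - g σ| ≤ κ) : HammingLipschitz κ g := fun σ v => by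
  by_cases hv : v ∈ σ
  · simpa only [Finset.insert_eq_of_mem hv, sub_self, abs_zero] using hκ
  · exact h σ v hv

lemma HammingLipschitz.nonneg (hg : HammingLipschitz κ g) (v : α) : 0 ≤ κ :=
  (abs_nonneg _).trans (hg ∅ v)

lemma HammingLipschitz.neg (hg : HammingLipschitz κ g) : HammingLipschitz κ (-g) := fun σ v => by
  simpa only [Pi.neg_apply, neg_sub_neg, abs_sub_comm] using hg σ v

lemma HammingLipschitz.comp_insert (hg : HammingLipschitz κ g) (v : α) :
    HammingLipschitz κ fun σ => g (insert v σ) := fun σ u => by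
  simpa only [Finset.insert_comm v u] using hg (insert v σ) u

variable [Fintype α] {G : SimpleGraph α} {lam : α → ℝ}

/-- How much the mean of `g` changes when `v` is revealed to be occupied rather than empty. -/
def influence (G : SimpleGraph α) (lam : α → ℝ) (v : α) (g : Finset α → ℝ) : ℝ :=
  |expect (hardcore G (deleteClosedNbhd G lam v)) (fun σ => g (insert v σ)) -
    expect (hardcore G (deleteVerts lam {v})) g|

lemma abs_expect_deleteVerts_sub (hlam : 0 ≤ lam) (v : α) (g : Finset α → ℝ) :
    |expect (hardcore G (deleteVerts lam {v})) g - expect (hardcore G lam) g| =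
      occ G lam v * influence G lam v g := by
  rw [expect_hardcore_eq hlam v, influence, ← abs_of_nonneg (occ_nonneg hlam v), ← abs_mul,
    ← abs_neg, abs_of_nonneg (occ_nonneg hlam v)]
  congr 1
  ring

/- The vertices of `N` are deleted one after another; `p u` is the occupation probability of `u` at
the time of its deletion. -/
lemma exists_occ_prod_eq_and_abs_expect_sub_le (hlam : 0 ≤ lam) {M : ℝ} (N : Finset α)
    (hM : ∀ H : Set α, ∀ u ∈ N,
      √(occ G (deleteVerts lam H) u) * influence G (deleteVerts lam H) u g ≤ M) :
    ∃ p : α → ℝ, 0 ≤ p ∧ p ≤ 1 ∧ p ≤ lam ∧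
      ∏ u ∈ N, (1 - p u) = hcPartition G (deleteVerts lam N) / hcPartition G lam ∧
      |expect (hardcore G (deleteVerts lam N)) g - expect (hardcore G lam) g| ≤
        M * ∑ u ∈ N, √(p u) := by
  induction N using Finset.induction_on generalizing lam with
  | empty =>
    refine ⟨0, le_rfl, zero_le_one, hlam, ?_, ?_⟩
    · simp [deleteVerts_empty, div_self (hcPartition_pos hlam).ne']
    · simp [deleteVerts_empty]
  | insert v N hvN ih =>
    have hdel := deleteVerts_nonneg hlam {v}
    obtain ⟨p, hp_nonneg, hp_le_one, hp_le, hprod, hmean⟩ := ih hdel fun H u hu => by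
      simpa only [deleteVerts_deleteVerts] using hM ({v} ∪ H) u (Finset.mem_insert_of_mem hu)
    have hunion :
        deleteVerts (deleteVerts lam {v}) N = deleteVerts lam ↑(insert v N) := by
      rw [deleteVerts_deleteVerts, Finset.coe_insert, Set.singleton_union]
    have hp_off : ∀ u ∈ N, Function.update p v (occ G lam v) u = p u := fun u hu =>
      Function.update_of_ne (ne_of_mem_of_not_mem hu hvN) _ _
    refine ⟨Function.update p v (occ G lam v), ?_, ?_, ?_, ?_, ?_⟩
    · exact le_update_iff.2 ⟨occ_nonneg hlam v, fun u _ => hp_nonneg u⟩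
    · exact update_le_iff.2 ⟨occ_le_one hlam v, fun u _ => hp_le_one u⟩
    · exact update_le_iff.2
        ⟨occ_le hlam v, fun u _ => (hp_le u).trans (deleteVerts_le hlam {v} u)⟩
    · rw [Finset.prod_insert hvN, Finset.prod_congr rfl fun u hu => by rw [hp_off u hu], hprod,
        Function.update_self, one_sub_occ hlam, hunion, mul_comm,
        div_mul_div_cancel₀ (hcPartition_pos hdel).ne']
    · rw [Finset.sum_insert hvN, Finset.sum_congr rfl fun u hu => by rw [hp_off u hu],
        Function.update_self, mul_add, add_comm, ← hunion]
      refine (abs_sub_le _ (expect (hardcore G (deleteVerts lam {v})) g) _).trans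
        (add_le_add hmean ?_)
      have hM_v := hM ∅ v (Finset.mem_insert_self v N)
      rw [deleteVerts_empty] at hM_v
      calc |expect (hardcore G (deleteVerts lam {v})) g - expect (hardcore G lam) g|
          = √(occ G lam v) * influence G lam v g * √(occ G lam v) := by
            rw [abs_expect_deleteVerts_sub hlam, mul_right_comm,
              Real.mul_self_sqrt (occ_nonneg hlam v)]
        _ ≤ M * √(occ G lam v) := by gcongr

lemma exists_occ_eq_odds_div_and_influence_le (hlam : 0 ≤ lam) (hg : HammingLipschitz κ g) {M : ℝ}
    (v : α) [Fintype (G.neighborSet v)]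
    (hM : ∀ N : Set α, v ∈ N → ∀ u, G.Adj v u →
      √(occ G (deleteVerts lam N) u) * influence G (deleteVerts lam N) u g ≤ M) :
    ∃ p : α → ℝ, 0 ≤ p ∧ p ≤ 1 ∧ p ≤ lam ∧
      (∃ y, y = lam v * ∏ u ∈ G.neighborFinset v, (1 - p u) ∧ occ G lam v = y / (1 + y)) ∧
      influence G lam v g ≤ κ + M * ∑ u ∈ G.neighborFinset v, √(p u) := by
  have hnbhd :
      deleteVerts (deleteVerts lam {v}) (G.neighborFinset v) = deleteClosedNbhd G lam v := by
    rw [deleteVerts_deleteVerts, SimpleGraph.coe_neighborFinset, Set.singleton_union,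
      deleteClosedNbhd]
  obtain ⟨p, hp_nonneg, hp_le_one, hp_le, hprod, hmean⟩ :=
    exists_occ_prod_eq_and_abs_expect_sub_le (G := G) (g := g) (M := M)
      (deleteVerts_nonneg hlam {v}) (G.neighborFinset v) fun H u hu => by
        rw [deleteVerts_deleteVerts]
        exact hM ({v} ∪ H) (Set.mem_union_left H rfl) u ((G.mem_neighborFinset v u).1 hu)
  rw [hnbhd] at hprod hmean
  refine ⟨p, hp_nonneg, hp_le_one, hp_le.trans (deleteVerts_le hlam {v}),
    ⟨_, rfl, occ_eq_odds_div hlam (by rw [hprod])⟩, ?_⟩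
  have hnbhd_nonneg : 0 ≤ deleteClosedNbhd G lam v := deleteVerts_nonneg hlam _
  exact (abs_sub_le _ (expect (hardcore G (deleteClosedNbhd G lam v)) g) _).trans <| add_le_add
    (abs_expect_sub_expect_le (hardcore_nonneg hnbhd_nonneg) (sum_hardcore hnbhd_nonneg)
      fun σ => hg σ v) hmean

section Uniqueness

variable [DecidableRel G.Adj] {Δ : ℕ} {δ : ℝ}

lemma sqrt_occ_mul_influence_le (hΔ : 3 ≤ Δ) (hdeg : ∀ v, G.degree v ≤ Δ) (hδ : 0 < δ)
    (hlam : 0 ≤ lam) (hcrit : ∀ v, lam v ≤ (1 - δ) * hcCrit Δ) (hg : HammingLipschitz κ g)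
    {v w : α} (hvw : G.Adj v w) (hw : lam w = 0) :
    √(occ G lam v) * influence G lam v g ≤ κ * √(hcCrit Δ) * (14 / δ) := by
  have hκ := hg.nonneg v
  set M := κ * √(hcCrit Δ) * (14 / δ) with hM
  have hM_nonneg : 0 ≤ M := by positivity
  induction lam using deleteVerts_induction generalizing v w with
  | step lam ih =>
  rcases eq_or_ne (lam v) 0 with hv | hv
  · have hocc : occ G lam v = 0 := by simp [occ_eq, hv]
    rwa [hocc, Real.sqrt_zero, zero_mul]
  · obtain ⟨p, hp_nonneg, hp_le_one, hp_le, ⟨y, hy, hocc⟩, hinfl⟩ :=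
      exists_occ_eq_odds_div_and_influence_le hlam hg v fun N hvN u hvu =>
        ih N v hvN hv (deleteVerts_nonneg hlam N)
          (fun u => (deleteVerts_le hlam N u).trans (hcrit u)) hvu.symm (deleteVerts_of_mem hvN)
    have hpw : p w = 0 := le_antisymm (hw ▸ hp_le w) (hp_nonneg w)
    have hw_mem : w ∈ G.neighborFinset v := (G.mem_neighborFinset v w).2 hvw
    -- The deleted neighbour `w` is the parent of `v`, so `v` has at most `Δ - 1` children.
    have hcontr : √(occ G lam v) * ∑ u ∈ G.neighborFinset v, √(p u) ≤ 1 - δ / 14 := by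
      rw [← Finset.sum_erase (a := w) _ (by simp [hpw]), hocc]
      rw [← Finset.prod_erase (a := w) _ (by simp [hpw])] at hy
      refine sqrt_odds_mul_sum_sqrt_le hΔ (fun u _ => ⟨hp_nonneg u, hp_le_one u⟩) ?_ hδ.le
        (hlam v) (hcrit v) hy
      rw [Finset.card_erase_of_mem hw_mem, SimpleGraph.card_neighborFinset_eq_degree]
      exact Nat.sub_le_sub_right (hdeg v) 1
    have hocc_le : occ G lam v ≤ hcCrit Δ := by
      nlinarith [occ_le (G := G) hlam v, hcrit v, hcCrit_pos hΔ]
    calc √(occ G lam v) * influence G lam v g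
        ≤ √(occ G lam v) * (κ + M * ∑ u ∈ G.neighborFinset v, √(p u)) := by gcongr
      _ = κ * √(occ G lam v) + M * (√(occ G lam v) * ∑ u ∈ G.neighborFinset v, √(p u)) := by ring
      _ ≤ κ * √(hcCrit Δ) + M * (1 - δ / 14) := by gcongr
      _ = M := by rw [hM]; field_simp; ring

lemma influence_le (hΔ : 3 ≤ Δ) (hdeg : ∀ v, G.degree v ≤ Δ) (hδ : 0 < δ)
    (hlam : 0 ≤ lam) (hcrit : ∀ v, lam v ≤ (1 - δ) * hcCrit Δ) (hg : HammingLipschitz κ g) (v : α) :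
    influence G lam v g ≤ κ * (1 + 252 / δ) := by
  have hκ := hg.nonneg v
  have hcrit_pos := hcCrit_pos hΔ
  obtain ⟨p, -, -, hp_le, -, hinfl⟩ :=
    exists_occ_eq_odds_div_and_influence_le hlam hg v fun N hvN u hvu =>
      sqrt_occ_mul_influence_le hΔ hdeg hδ (deleteVerts_nonneg hlam N)
        (fun u => (deleteVerts_le hlam N u).trans (hcrit u)) hg hvu.symm (deleteVerts_of_mem hvN)
  have hp_crit : ∀ u, p u ≤ hcCrit Δ := fun u => by nlinarith [hp_le u, hcrit u]
  have hsum : ∑ u ∈ G.neighborFinset v, √(p u) ≤ Δ * √(hcCrit Δ) :=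
    calc ∑ u ∈ G.neighborFinset v, √(p u) ≤ G.degree v * √(hcCrit Δ) := by
          rw [← nsmul_eq_mul, ← SimpleGraph.card_neighborFinset_eq_degree]
          exact Finset.sum_le_card_nsmul _ _ _ fun u _ => Real.sqrt_le_sqrt (hp_crit u)
      _ ≤ Δ * √(hcCrit Δ) := by gcongr; exact hdeg v
  calc influence G lam v g
      ≤ κ + κ * √(hcCrit Δ) * (14 / δ) * (Δ * √(hcCrit Δ)) := hinfl.trans (by gcongr)
    _ = κ + κ * (14 / δ) * (Δ * (√(hcCrit Δ) * √(hcCrit Δ))) := by ring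
    _ ≤ κ + κ * (14 / δ) * 18 := by
        rw [Real.mul_self_sqrt hcrit_pos.le]; gcongr; exact mul_hcCrit_le hΔ
    _ = κ * (1 + 252 / δ) := by ring

end Uniqueness

end Influence

section Concentration

variable {α : Type*} [Fintype α] [DecidableEq α] {G : SimpleGraph α} {lam : α → ℝ} {κ L s : ℝ}
  {g : Finset α → ℝ}

/-- Revealing a vertex moves the mean of any `κ`-Lipschitz function by at most `L`, whichever
vertices have been deleted before. -/
def BoundedInfluence (G : SimpleGraph α) (lam : α → ℝ) (κ L : ℝ) : Prop :=
  ∀ (N : Set α) (v : α) (g : Finset α → ℝ), HammingLipschitz κ g →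
    influence G (deleteVerts lam N) v g ≤ L

lemma BoundedInfluence.deleteVerts (h : BoundedInfluence G lam κ L) (N : Set α) :
    BoundedInfluence G (deleteVerts lam N) κ L := fun H v g hg => by
  rw [deleteVerts_deleteVerts]
  exact h (N ∪ H) v g hg

lemma BoundedInfluence.influence_le (h : BoundedInfluence G lam κ L) (hg : HammingLipschitz κ g)
    (v : α) : influence G lam v g ≤ L := by
  simpa only [deleteVerts_empty] using h ∅ v g hg

lemma expect_exp_le_of_reveal (hlam : 0 ≤ lam) (v : α) (hL : influence G lam v g ≤ L)
    (hs : |s| * L ≤ 1) {R : ℝ}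
    (hdel : expect (hardcore G (deleteVerts lam {v})) (fun σ => Real.exp (s * g σ)) ≤
      Real.exp (s * expect (hardcore G (deleteVerts lam {v})) g + R))
    (hnbhd : expect (hardcore G (deleteClosedNbhd G lam v))
        (fun σ => Real.exp (s * g (insert v σ))) ≤
      Real.exp (s * expect (hardcore G (deleteClosedNbhd G lam v)) (fun σ => g (insert v σ)) + R)) :
    expect (hardcore G lam) (fun σ => Real.exp (s * g σ)) ≤
      Real.exp (s * expect (hardcore G lam) g + (lam v * (s * L) ^ 2 + R)) := by
  rw [expect_hardcore_eq hlam v g, expect_hardcore_eq hlam v]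
  set p := occ G lam v
  set a := s * expect (hardcore G (deleteClosedNbhd G lam v)) fun σ => g (insert v σ) with ha
  set b := s * expect (hardcore G (deleteVerts lam {v})) g with hb
  have hp_nonneg : 0 ≤ p := occ_nonneg hlam v
  have hp_compl : 0 ≤ 1 - p := sub_nonneg.2 (occ_le_one hlam v)
  have hp_le : p ≤ lam v := occ_le hlam v
  have hlam_v : 0 ≤ lam v := hlam v
  have hab : |a - b| ≤ |s| * L := by
    rw [ha, hb, ← mul_sub, abs_mul]
    exact mul_le_mul_of_nonneg_left hL (abs_nonneg s)
  have hab_sq : (a - b) ^ 2 ≤ (s * L) ^ 2 :=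
    sq_le_sq.2 (hab.trans (by rw [abs_mul]; gcongr; exact le_abs_self L))
  calc _ ≤ (1 - p) * Real.exp (b + R) + p * Real.exp (a + R) := by gcongr
    _ = ((1 - p) * Real.exp b + p * Real.exp a) * Real.exp R := by
        rw [Real.exp_add, Real.exp_add]; ring
    _ ≤ Real.exp ((1 - p) * b + p * a + p * (a - b) ^ 2) * Real.exp R := by
        gcongr; exact bernoulli_exp_le hp_nonneg (hab.trans hs)
    _ ≤ Real.exp ((1 - p) * b + p * a + lam v * (s * L) ^ 2) * Real.exp R := by gcongr
    _ = _ := by rw [← Real.exp_add, ha, hb]; ring_nf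

/- Revealing `v` costs at most `lam v * (s * L) ^ 2` in the exponent, and both conditional models
have lost at least the fugacity of `v`, which pays for it. -/
lemma expect_exp_le (hlam : 0 ≤ lam) (hL : BoundedInfluence G lam κ L) (hs : |s| * L ≤ 1)
    (hg : HammingLipschitz κ g) :
    expect (hardcore G lam) (fun σ => Real.exp (s * g σ)) ≤
      Real.exp (s * expect (hardcore G lam) g + (s * L) ^ 2 * ∑ v, lam v) := by
  induction lam using deleteVerts_induction generalizing g with
  | step lam ih =>
  by_cases hzero : ∃ v, lam v ≠ 0
  · obtain ⟨v, hv⟩ := hzero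
    have ih_del : ∀ N : Set α, v ∈ N → ∀ {h : Finset α → ℝ}, HammingLipschitz κ h →
        expect (hardcore G (deleteVerts lam N)) (fun σ => Real.exp (s * h σ)) ≤
          Real.exp (s * expect (hardcore G (deleteVerts lam N)) h +
            (s * L) ^ 2 * (∑ u, lam u - lam v)) := fun N hvN h hh => by
      refine (ih N v hvN hv (deleteVerts_nonneg hlam N) (hL.deleteVerts N) hh).trans ?_
      gcongr
      exact le_sub_iff_add_le.2 (sum_deleteVerts_add_le hlam hvN)
    refine (expect_exp_le_of_reveal hlam v (hL.influence_le hg v) hs (ih_del {v} rfl hg)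
      (ih_del _ (Set.mem_insert v _) (hg.comp_insert v))).trans_eq ?_
    ring_nf
  · push Not at hzero
    obtain rfl : lam = 0 := funext hzero
    simp [expect_hardcore_zero]

lemma upperTail_le_exp (hlam : 0 ≤ lam) (hL : BoundedInfluence G lam κ L)
    (hg : HammingLipschitz κ g) (hs : 0 ≤ s) (hsL : s * L ≤ 1) (t : ℝ) :
    upperTail (hardcore G lam) g t ≤ Real.exp ((s * L) ^ 2 * ∑ v, lam v - s * t) := by
  refine (upperTail_le_exp_mul_expect_exp (hardcore_nonneg hlam) g hs t).trans ?_
  calc _ ≤ Real.exp (-(s * (expect (hardcore G lam) g + t))) *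
        Real.exp (s * expect (hardcore G lam) g + (s * L) ^ 2 * ∑ v, lam v) := by
        gcongr; exact expect_exp_le hlam hL (by rwa [abs_of_nonneg hs]) hg
    _ = _ := by rw [← Real.exp_add]; ring_nf

lemma upperTail_le_exp_neg_sq_div (hlam : 0 ≤ lam) (hL : BoundedInfluence G lam κ L)
    (hL_pos : 0 < L) (hg : HammingLipschitz κ g) {t : ℝ} (ht : 0 ≤ t)
    (htL : t ≤ 2 * (∑ v, lam v) * L) :
    upperTail (hardcore G lam) g t ≤ Real.exp (-t ^ 2 / (4 * (∑ v, lam v) * L ^ 2)) :=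
  le_exp_neg_sq_div_of_chernoff (fun _ hs hsL => upperTail_le_exp hlam hL hg hs hsL t)
    (Finset.sum_nonneg fun v _ => hlam v) hL_pos ht htL

lemma upperTail_le_exp_mul_exp_neg_div (hlam : 0 ≤ lam) (hL : BoundedInfluence G lam κ L)
    (hL_pos : 0 < L) (hg : HammingLipschitz κ g) (t : ℝ) :
    upperTail (hardcore G lam) g t ≤ Real.exp (∑ v, lam v) * Real.exp (-t / L) :=
  le_exp_mul_exp_neg_div_of_chernoff
    (fun _ hs hsL => upperTail_le_exp hlam hL hg hs hsL t) hL_pos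

end Concentration

theorem hardcore_monotone_concentration_general (δ : ℝ) (hδ : 0 < δ) :
    ∃ c C : ℝ, 0 < c ∧ 0 < C ∧
      ∀ (α : Type*) [Fintype α] [DecidableEq α] (G : SimpleGraph α) [DecidableRel G.Adj] (Δ : ℕ),
        3 ≤ Δ → (∀ v, G.degree v ≤ Δ) →
        ∀ lam : α → ℝ, 0 ≤ lam → (∀ v, lam v ≤ (1 - δ) * hcCrit Δ) →
          ∀ (κ : ℝ) (f : Finset α → ℝ), 0 < κ → HammingLipschitz κ f →
            (∀ t : ℝ, 0 ≤ t → t ≤ C * (∑ v, lam v) * κ →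
              upperTail (hardcore G lam) f t ≤
                Real.exp (-(c * t ^ 2) / ((∑ v, lam v) * κ ^ 2)) ∧
              lowerTail (hardcore G lam) f t ≤
                Real.exp (-(c * t ^ 2) / ((∑ v, lam v) * κ ^ 2))) ∧
            (∀ t : ℝ, 0 ≤ t →
              upperTail (hardcore G lam) f t ≤
                Real.exp (C * ∑ v, lam v) * Real.exp (-(c * t) / κ) ∧
              lowerTail (hardcore G lam) f t ≤
                Real.exp (C * ∑ v, lam v) * Real.exp (-(c * t) / κ)) := by
  obtain ⟨K, hK_def⟩ : ∃ K : ℝ, K = 1 + 252 / δ := ⟨_, rfl⟩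
  have hK : 1 ≤ K := by rw [hK_def, le_add_iff_nonneg_right]; positivity
  refine ⟨1 / (4 * K ^ 2), 2 * K, by positivity, by positivity,
    fun α _ _ G _ Δ hΔ hdeg lam hlam hcrit κ f hκ hf => ?_⟩
  have hT : 0 ≤ ∑ v, lam v := Finset.sum_nonneg fun v _ => hlam v
  have hL : BoundedInfluence G lam κ (κ * K) := fun N v g hg =>
    hK_def ▸ influence_le hΔ hdeg hδ (deleteVerts_nonneg hlam N)
      (fun u => (deleteVerts_le hlam N u).trans (hcrit u)) hg v
  have hgauss : ∀ g, HammingLipschitz κ g → ∀ t, 0 ≤ t → t ≤ 2 * K * (∑ v, lam v) * κ →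
      upperTail (hardcore G lam) g t ≤
        Real.exp (-(1 / (4 * K ^ 2) * t ^ 2) / ((∑ v, lam v) * κ ^ 2)) := fun g hg t ht htC =>
    (upperTail_le_exp_neg_sq_div hlam hL (by positivity) hg ht
      (htC.trans_eq (by ring))).trans_eq (by congr 1; ring)
  have hexp : ∀ g, HammingLipschitz κ g → ∀ t, 0 ≤ t →
      upperTail (hardcore G lam) g t ≤
        Real.exp (2 * K * ∑ v, lam v) * Real.exp (-(1 / (4 * K ^ 2) * t) / κ) :=
      fun g hg t ht => by
    refine (upperTail_le_exp_mul_exp_neg_div hlam hL (by positivity) hg t).trans ?_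
    have hrate : 1 / (4 * K ^ 2) ≤ 1 / K := one_div_le_one_div_of_le (by positivity) (by nlinarith)
    have hrate_t : -t / (κ * K) ≤ -(1 / (4 * K ^ 2) * t) / κ :=
      calc -t / (κ * K) = -(1 / K * t) / κ := by ring
        _ ≤ -(1 / (4 * K ^ 2) * t) / κ := by gcongr
    gcongr
    exact le_mul_of_one_le_left hT (by linarith)
  refine ⟨fun t ht htC => ⟨hgauss f hf t ht htC, ?_⟩, fun t ht => ⟨hexp f hf t ht, ?_⟩⟩
  · rw [lowerTail_eq_upperTail_neg]
    exact hgauss (-f) hf.neg t ht htC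
  · rw [lowerTail_eq_upperTail_neg]
    exact hexp (-f) hf.neg t ht

/-- Bernstein-type concentration for increasing `κ`-Lipschitz
functions of the hardcore model at fugacity `λ ≤ (1−δ)·λ_Δ`: a sub-Gaussian
regime (a) for moderate deviations and a subexponential regime (b) for all `t ≥ 0`. -/
theorem hardcore_monotone_concentration :
    ∀ δ : ℝ, δ ∈ Set.Ioo (0 : ℝ) 1 →
    ∃ c C : ℝ, 0 < c ∧ 0 < C ∧
      ∀ (V : Type) [Fintype V] [DecidableEq V] (G : SimpleGraph V)
        [DecidableRel G.Adj] (Δ : ℕ), 3 ≤ Δ →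
        (∀ v : V, G.degree v ≤ Δ) →
        ∀ lam : ℝ, 0 < lam → lam ≤ (1 - δ) * hcCrit Δ →
          ∀ (κ : ℝ) (f : Finset V → ℝ), 0 < κ →
            (∀ (σ : Finset V) (v : V), v ∉ σ →
              0 ≤ f (insert v σ) - f σ ∧ f (insert v σ) - f σ ≤ κ) →
            (∀ t : ℝ, 0 ≤ t → t ≤ C * lam * κ * Fintype.card V →
              upperTail (hardcore G (fun _ => lam)) f t ≤
                Real.exp (-(c * t ^ 2) / (lam * κ ^ 2 * Fintype.card V)) ∧
              lowerTail (hardcore G (fun _ => lam)) f t ≤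
                Real.exp (-(c * t ^ 2) / (lam * κ ^ 2 * Fintype.card V))) ∧
            (∀ t : ℝ, 0 ≤ t →
              upperTail (hardcore G (fun _ => lam)) f t ≤
                Real.exp (C * lam * Fintype.card V) * Real.exp (-(c * t) / κ) ∧
              lowerTail (hardcore G (fun _ => lam)) f t ≤
                Real.exp (C * lam * Fintype.card V) * Real.exp (-(c * t) / κ)) := by
  intro δ hδ
  obtain ⟨c, C, hc, hC, h⟩ := hardcore_monotone_concentration_general δ hδ.1
  refine ⟨c, C, hc, hC, fun V _ _ G _ Δ hΔ hdeg lam hlam hcrit κ f hκ hf => ?_⟩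
  have hLip : HammingLipschitz κ f := .of_forall_notMem hκ.le fun σ v hv =>
    (abs_of_nonneg (hf σ v hv).1).trans_le (hf σ v hv).2
  obtain ⟨hgauss, hexp⟩ := h V G Δ hΔ hdeg (fun _ => lam) (fun _ => hlam.le) (fun _ => hcrit) κ f
    hκ hLip
  have hsum : ∑ _ : V, lam = lam * Fintype.card V := by simp [mul_comm]
  rw [hsum] at hgauss hexp
  refine ⟨fun t ht htC => ?_, fun t ht => ?_⟩
  · rw [mul_right_comm lam]
    exact hgauss t ht (htC.trans_eq (by ring))
  · rw [mul_assoc C]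
    exact hexp t ht
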